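/- Let G be a finite simple connected graph and let S be a Carathéodory independent set of G with |S| ≥ 2. Then the subgraph of G induced by the cycle convex hull hull(S) is connected. -/

import Mathlib

open SimpleGraph

/-- A set `S` is cycle convex in `G` if no vertex `w` outside `S` is such that the
subgraph induced by `S ∪ {w}` contains a cycle through `w`. -/
def IsCycleConvex {V : Type*} (G : SimpleGraph V) (S : Set V) : Prop :=
  ∀ w : V, w ∉ S →
    ¬ ∃ c : (G.induce (S ∪ {w})).Walk ⟨w, Set.mem_union_right S rfl⟩
        ⟨w, Set.mem_union_right S rfl⟩, c.IsCycle

/-- The cycle convex hull of `S`: the smallest cycle convex set containing `S`. -/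
def cycleHull {V : Type*} (G : SimpleGraph V) (S : Set V) : Set V :=
  ⋂₀ {T : Set V | S ⊆ T ∧ IsCycleConvex G T}

/-- `S` is Carathéodory independent in the cycle convexity of `G`. -/
def CIndep {V : Type*} (G : SimpleGraph V) (S : Set V) : Prop :=
  ∃ p ∈ cycleHull G S, ∀ a ∈ S, p ∉ cycleHull G (S \ {a})

/-- The Carathéodory number of `G` in the cycle convexity. -/
noncomputable def carNumber {V : Type*} (G : SimpleGraph V) : ℕ :=
  sSup {n : ℕ | ∃ S : Set V, CIndep G S ∧ S.ncard = n}

/-!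
A set `S` is cycle convex if and only if no vertex outside `S` has two distinct neighbours joined
by a walk inside `S`. Hence, for disjoint `A` and `B` with no edges between them, `A ∪ B` is cycle
convex if and only if both `A` and `B` are. If `hull(S) = A ∪ B` is such a splitting, it follows
that `hull(S) = hull(S ∩ A) ∪ hull(S ∩ B)`. A vertex witnessing the independence of `S` lies in one
of these two hulls, which forces `S ⊆ A` or `S ⊆ B`, and by convexity `hull(S) ⊆ A` or
`hull(S) ⊆ B`.
-/

section InducedSubgraphs

variable {V : Type*} {G : SimpleGraph V} {S A B : Set V} {w x y : V}

lemma exists_isCycle_induce_iff (u : S) :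
    (∃ c : (G.induce S).Walk u u, c.IsCycle) ↔
      ∃ c : G.Walk u u, c.IsCycle ∧ ∀ z ∈ c.support, z ∈ S := by
  let f := (Embedding.induce (G := G) S).toHom
  have hf : Function.Injective f := Subtype.val_injective
  constructor
  · rintro ⟨c, hc⟩
    refine ⟨c.map f, hc.map hf, fun z hz => ?_⟩
    obtain ⟨v, -, rfl⟩ := List.mem_map.1 (c.support_map f ▸ hz)
    exact v.2
  · rintro ⟨c, hc, hcS⟩
    refine ⟨c.induce S hcS, (Walk.isCycle_map_iff_of_injective hf).1 ?_⟩
    rwa [Walk.map_induce]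

lemma exists_walk_between_neighbors_of_isCycle {c : G.Walk w w} (hc : c.IsCycle)
    (hcS : ∀ z ∈ c.support, z ∈ S ∪ {w}) :
    ∃ x y, x ≠ y ∧ G.Adj w x ∧ G.Adj w y ∧ ∃ q : G.Walk x y, ∀ z ∈ q.support, z ∈ S := by
  obtain _ | @⟨_, x, _, hwx, p⟩ := c
  · exact absurd rfl hc.ne_nil
  have hp_not_nil : ¬p.Nil := Walk.not_nil_of_isCycle_cons hc
  have hp : p.IsPath := ((Walk.cons_isCycle_iff p hwx).1 hc).1
  have hxy : x ≠ p.penultimate := by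
    simpa [Walk.penultimate_cons_of_not_nil _ _ hp_not_nil] using hc.snd_ne_penultimate
  have hyw : G.Adj p.penultimate w := Walk.adj_penultimate hp_not_nil
  have hw : w ∉ p.dropLast.support := by
    rw [← Walk.concat_dropLast hyw, Walk.concat_isPath_iff] at hp
    exact hp.2
  refine ⟨x, p.penultimate, hxy, hwx, hyw.symm, p.dropLast, fun z hz => ?_⟩
  have hzp : z ∈ p.support := p.isSubwalk_rfl.dropLast.support_subset hz
  exact (hcS z (List.mem_cons_of_mem _ hzp)).resolve_right (ne_of_mem_of_not_mem hz hw)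

lemma exists_isCycle_of_walk_between_neighbors (hw : w ∉ S) (hxy : x ≠ y)
    (hwx : G.Adj w x) (hwy : G.Adj w y) (q : G.Walk x y) (hq : ∀ z ∈ q.support, z ∈ S) :
    ∃ c : G.Walk w w, c.IsCycle ∧ ∀ z ∈ c.support, z ∈ S ∪ {w} := by
  classical
  have hqS : ∀ z ∈ q.bypass.support, z ∈ S :=
    fun z hz => hq z (q.support_bypass_subset_support hz)
  have hwq : w ∉ q.bypass.support := fun h => hw (hqS w h)
  have hpath : (q.bypass.concat hwy.symm).IsPath := q.bypass_isPath.concat hwq hwy.symm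
  have hedge : s(w, x) ∉ (q.bypass.concat hwy.symm).edges := by
    rw [Walk.edges_concat, List.concat_eq_append, List.mem_append, List.mem_singleton]
    rintro (h | h)
    · exact hwq (Walk.fst_mem_support_of_mem_edges _ h)
    · exact hxy (Sym2.congr_right.1 (h.trans Sym2.eq_swap))
  refine ⟨.cons hwx (q.bypass.concat hwy.symm), (Walk.cons_isCycle_iff _ _).2 ⟨hpath, hedge⟩,
    fun z hz => ?_⟩
  rw [Walk.support_cons, Walk.support_concat, List.mem_cons, List.mem_append,
    List.mem_singleton] at hz
  rcases hz with rfl | hz | rfl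
  · exact Or.inr rfl
  · exact Or.inl (hqS z hz)
  · exact Or.inr rfl

lemma support_subset_left_of_subset_union (hAB : Gᶜ.IsCompleteBetween A B) (q : G.Walk x y)
    (hx : x ∈ A) (hq : ∀ z ∈ q.support, z ∈ A ∪ B) : ∀ z ∈ q.support, z ∈ A := by
  induction q with
  | nil => simpa using hx
  | cons hxv q ih =>
    rw [Walk.support_cons, List.forall_mem_cons] at hq ⊢
    have hvB := fun hvB => ((compl_adj ..).1 (hAB hx hvB)).2 hxv
    exact ⟨hx, ih ((hq.2 _ q.start_mem_support).resolve_right hvB) hq.2⟩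

lemma preconnected_induce_of_forall_isCompleteBetween_compl
    (h : ∀ A B, A ∪ B = S → Gᶜ.IsCompleteBetween A B → S ⊆ A ∨ S ⊆ B) :
    (G.induce S).Preconnected := by
  intro x y
  let R : Set S := {z | (G.induce S).Reachable x z}
  have hR : Gᶜ.IsCompleteBetween (Subtype.val '' R) (Subtype.val '' Rᶜ) := by
    rintro _ ⟨a, ha, rfl⟩ _ ⟨b, hb, rfl⟩
    refine (compl_adj ..).2 ⟨fun hab => hb (Subtype.val_injective hab ▸ ha), fun hab => hb ?_⟩
    have hab' : (G.induce S).Adj a b := hab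
    exact ha.trans hab'.reachable
  have hS : Subtype.val '' R ∪ Subtype.val '' Rᶜ = S := by
    rw [← Set.image_union, Set.union_compl_self, Set.image_univ, Subtype.range_val]
  rcases h _ _ hS hR with hSR | hSR
  · exact (Subtype.val_injective.mem_set_image).1 (hSR y.2)
  · exact absurd (Reachable.refl x) ((Subtype.val_injective.mem_set_image).1 (hSR x.2))

end InducedSubgraphs

section CycleConvexity

variable {V : Type*} {G : SimpleGraph V} {S T A B : Set V}

lemma isCycleConvex_iff_forall_walk :
    IsCycleConvex G S ↔ ∀ w ∉ S, ∀ ⦃x y⦄, G.Adj w x → G.Adj w y →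
      ∀ q : G.Walk x y, (∀ z ∈ q.support, z ∈ S) → x = y := by
  refine forall₂_congr fun w hw => ?_
  rw [exists_isCycle_induce_iff]
  constructor
  · intro h x y hwx hwy q hq
    by_contra hxy
    exact h (exists_isCycle_of_walk_between_neighbors hw hxy hwx hwy q hq)
  · rintro h ⟨c, hc, hcS⟩
    obtain ⟨x, y, hxy, hwx, hwy, q, hq⟩ := exists_walk_between_neighbors_of_isCycle hc hcS
    exact hxy (h hwx hwy q hq)

lemma isCycleConvex_sInter {F : Set (Set V)} (hF : ∀ T ∈ F, IsCycleConvex G T) :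
    IsCycleConvex G (⋂₀ F) := by
  rw [isCycleConvex_iff_forall_walk]
  intro w hw x y hwx hwy q hq
  obtain ⟨T, hT, hwT⟩ : ∃ T ∈ F, w ∉ T := by
    simpa only [Set.mem_sInter, not_forall, exists_prop] using hw
  exact isCycleConvex_iff_forall_walk.1 (hF T hT) w hwT hwx hwy q fun z hz => hq z hz T hT

namespace IsCycleConvex

lemma union (hA : IsCycleConvex G A) (hB : IsCycleConvex G B)
    (hAB : Gᶜ.IsCompleteBetween A B) : IsCycleConvex G (A ∪ B) := by
  rw [isCycleConvex_iff_forall_walk] at hA hB ⊢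
  intro w hw x y hwx hwy q hq
  obtain ⟨hwA, hwB⟩ : w ∉ A ∧ w ∉ B := not_or.1 hw
  rcases hq x q.start_mem_support with hx | hx
  · exact hA w hwA hwx hwy q (support_subset_left_of_subset_union hAB q hx hq)
  · rw [Set.union_comm] at hq
    exact hB w hwB hwx hwy q (support_subset_left_of_subset_union hAB.symm q hx hq)

lemma of_union_left (h : IsCycleConvex G (A ∪ B)) (hAB : Gᶜ.IsCompleteBetween A B) :
    IsCycleConvex G A := by
  rw [isCycleConvex_iff_forall_walk] at h ⊢
  intro w hwA x y hwx hwy q hq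
  have hwB : w ∉ B := fun hwB =>
    ((compl_adj ..).1 (hAB (hq x q.start_mem_support) hwB)).2 hwx.symm
  exact h w (not_or.2 ⟨hwA, hwB⟩) hwx hwy q fun z hz => Or.inl (hq z hz)

lemma of_union_right (h : IsCycleConvex G (A ∪ B)) (hAB : Gᶜ.IsCompleteBetween A B) :
    IsCycleConvex G B :=
  of_union_left (Set.union_comm A B ▸ h) hAB.symm

end IsCycleConvex

lemma subset_cycleHull : S ⊆ cycleHull G S :=
  Set.subset_sInter fun _ hT => hT.1

lemma cycleHull_subset (hST : S ⊆ T) (hT : IsCycleConvex G T) : cycleHull G S ⊆ T :=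
  Set.sInter_subset_of_mem ⟨hST, hT⟩

lemma isCycleConvex_cycleHull : IsCycleConvex G (cycleHull G S) :=
  isCycleConvex_sInter fun _ hT => hT.2

lemma cycleHull_mono (hST : S ⊆ T) : cycleHull G S ⊆ cycleHull G T :=
  cycleHull_subset (hST.trans subset_cycleHull) isCycleConvex_cycleHull

lemma cycleHull_union (hST : Gᶜ.IsCompleteBetween (cycleHull G S) (cycleHull G T)) :
    cycleHull G (S ∪ T) = cycleHull G S ∪ cycleHull G T := by
  apply Set.Subset.antisymm
  · exact cycleHull_subset (Set.union_subset_union subset_cycleHull subset_cycleHull)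
      (isCycleConvex_cycleHull.union isCycleConvex_cycleHull hST)
  · exact Set.union_subset (cycleHull_mono Set.subset_union_left)
      (cycleHull_mono Set.subset_union_right)

lemma cycleHull_eq_union_cycleHull_inter (hA : IsCycleConvex G A) (hB : IsCycleConvex G B)
    (hAB : Gᶜ.IsCompleteBetween A B) (hS : S ⊆ A ∪ B) :
    cycleHull G S = cycleHull G (S ∩ A) ∪ cycleHull G (S ∩ B) := by
  have hSA : cycleHull G (S ∩ A) ⊆ A := cycleHull_subset Set.inter_subset_right hA
  have hSB : cycleHull G (S ∩ B) ⊆ B := cycleHull_subset Set.inter_subset_right hB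
  rw [← cycleHull_union fun _ ha _ hb => hAB (hSA ha) (hSB hb), ← Set.inter_union_distrib_left,
    Set.inter_eq_left.2 hS]

namespace CIndep

lemma cycleHull_nonempty (hS : CIndep G S) : (cycleHull G S).Nonempty :=
  hS.imp fun _ hp => hp.1

lemma subset_or_subset_of_cycleHull_subset (hS : CIndep G S)
    (h : cycleHull G S ⊆ cycleHull G (S ∩ A) ∪ cycleHull G (S ∩ B)) : S ⊆ A ∨ S ⊆ B := by
  obtain ⟨p, hp, hpS⟩ := hS
  have subset_of_mem {C : Set V} (hpC : p ∈ cycleHull G (S ∩ C)) : S ⊆ C := by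
    intro a ha
    by_contra haC
    have hSC : S ∩ C ⊆ S \ {a} :=
      Set.subset_sdiff_singleton Set.inter_subset_left fun haSC => haC haSC.2
    exact hpS a ha (cycleHull_mono hSC hpC)
  exact (h hp).imp subset_of_mem subset_of_mem

lemma subset_or_subset (hS : CIndep G S) (hA : IsCycleConvex G A) (hB : IsCycleConvex G B)
    (hAB : Gᶜ.IsCompleteBetween A B) (h : S ⊆ A ∪ B) : S ⊆ A ∨ S ⊆ B :=
  hS.subset_or_subset_of_cycleHull_subset (cycleHull_eq_union_cycleHull_inter hA hB hAB h).subset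

end CIndep

end CycleConvexity

theorem stmt_2_general {V : Type*} (G : SimpleGraph V) (S : Set V) (hS : CIndep G S) :
    (G.induce (cycleHull G S)).Connected := by
  have : Nonempty (cycleHull G S) := hS.cycleHull_nonempty.to_subtype
  refine ⟨preconnected_induce_of_forall_isCompleteBetween_compl fun A B hunion hAB => ?_⟩
  have hconvex : IsCycleConvex G (A ∪ B) := hunion ▸ isCycleConvex_cycleHull
  have hA : IsCycleConvex G A := hconvex.of_union_left hAB
  have hB : IsCycleConvex G B := hconvex.of_union_right hAB
  have hSAB : S ⊆ A ∪ B := subset_cycleHull.trans_eq hunion.symm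
  exact (hS.subset_or_subset hA hB hAB hSAB).imp (cycleHull_subset · hA) (cycleHull_subset · hB)

/-- Lemma 1(c): the cycle convex hull of a Caratheodory independent set of size
at least 2 induces a connected subgraph. -/
theorem stmt_2 {V : Type*} [Fintype V] (G : SimpleGraph V) (hG : G.Connected)
    (S : Set V) (hS : CIndep G S) (h2 : 2 ≤ S.ncard) :
    (G.induce (cycleHull G S)).Connected :=
  stmt_2_general G S hS
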